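/- arXiv:1511.03724 — 4 statements merged into one kernel-verified Lean document; each statement's English description precedes it below -/
import Mathlib

section
/- Fix a real t > 0 and an integer n ≥ 0, set w̄ₙ = (n+1)π/t, and let F denote F₊ if n is even and F₋ if n is odd. Then there exist sₙ > 0 and C > 0 such that for every s ∈ (0, sₙ) there is exactly one w(s) ∈ ℂ with nπ/t < Re w(s) < (n+1)π/t and F(s,t;w(s)) = 0, and this zero satisfies |w(s) − w̄ₙ·(1 − s/t + (s/t)² − i·(s²/(2t))·w̄ₙ)| ≤ C·s³. -/
open Real

/-- `F₊(s,t;w) = 1 + i(1 + e^{itw})/(sw)` -/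
noncomputable def Fplus (s t : ℝ) (w : ℂ) : ℂ :=
  1 + Complex.I * (1 + Complex.exp (Complex.I * t * w)) / (s * w)

/-- `F₋(s,t;w) = 1 + i(1 − e^{itw})/(sw)` -/
noncomputable def Fminus (s t : ℝ) (w : ℂ) : ℂ :=
  1 + Complex.I * (1 - Complex.exp (Complex.I * t * w)) / (s * w)

/-- `Complex.log` is `2`-Lipschitz on the disc of radius `1/2` about `1`. -/
lemma norm_log_sub_log_le {x y : ℂ} (hx : ‖x - 1‖ < 1 / 2) (hy : ‖y - 1‖ < 1 / 2) :
    ‖Complex.log x - Complex.log y‖ ≤ 2 * ‖x - y‖ := by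
  have hre : ∀ z ∈ Metric.ball (1 : ℂ) (1 / 2), 1 / 2 ≤ z.re := by
    intro z hz
    rw [mem_ball_iff_norm] at hz
    have h := (abs_le.mp (Complex.abs_re_le_norm (z - 1))).1
    simp only [Complex.sub_re, Complex.one_re] at h
    linarith
  refine (convex_ball (1 : ℂ) (1 / 2)).norm_image_sub_le_of_norm_hasDerivWithin_le
    (f := Complex.log) (f' := fun z => z⁻¹) ?_ ?_ ?_ ?_
  · intro z hz
    exact (Complex.hasDerivAt_log (Or.inl (by linarith [hre z hz]))).hasDerivWithinAt
  · intro z hz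
    have h1 := hre z hz
    have h2 := Complex.re_le_norm z
    rw [norm_inv, inv_le_comm₀ (by linarith) (by norm_num)]
    linarith
  · rwa [mem_ball_iff_norm]
  · rwa [mem_ball_iff_norm]

/-- Zeros in the strip `-π < re z < 0` are confined to the unit disc, and solve the equation
obtained by taking principal logarithms. -/
lemma strip_zero_bounds {a N : ℝ} (ha : 0 < a) (hN : π ≤ N) (haN : a * (N + 1) ≤ 1 / 4) {z : ℂ}
    (h₁ : -π < z.re) (h₂ : z.re < 0)
    (hz : Complex.exp (Complex.I * z) = 1 - Complex.I * a * (N + z)) :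
    Complex.I * z = Complex.log (1 - Complex.I * a * (N + z)) ∧ ‖z‖ ≤ 1 := by
  have hpi := Real.pi_gt_three
  have hlog : Complex.I * z = Complex.log (1 - Complex.I * a * (N + z)) := by
    rw [← hz, Complex.log_exp] <;> simp <;> linarith
  refine ⟨hlog, ?_⟩
  have hnorm : Real.exp (-z.im) = ‖1 - Complex.I * a * (N + z)‖ := by
    rw [← hz, Complex.norm_exp]; simp
  have him : z.im ≤ 0 := by
    by_contra! hpos
    have h3 : Real.exp (-z.im) < 1 := Real.exp_lt_one_iff.mpr (by linarith)
    have h4 := Complex.re_le_norm (1 - Complex.I * a * (N + z))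
    simp at h4 hnorm
    nlinarith [mul_pos ha hpos]
  have hNz : ‖(N : ℂ) + z‖ ≤ N + -z.im := by
    refine (Complex.norm_le_abs_re_add_abs_im _).trans ?_
    simp only [Complex.add_re, Complex.ofReal_re, Complex.add_im, Complex.ofReal_im, zero_add]
    rw [abs_of_nonneg (by linarith), abs_of_nonpos him]
    linarith
  have hζ : ‖Complex.I * a * (N + z)‖ = a * ‖(N : ℂ) + z‖ := by
    simp [abs_of_pos ha]
  have him' : -z.im ≤ 1 := by
    have h5 := Real.add_one_le_exp (-z.im)
    have h6 := norm_sub_le (1 : ℂ) (Complex.I * a * (N + z))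
    rw [hζ, norm_one, ← hnorm] at h6
    have h7 := mul_le_mul_of_nonneg_left hNz ha.le
    nlinarith
  have hζ' : ‖-(Complex.I * a * (N + z))‖ ≤ 1 / 4 := by
    rw [norm_neg, hζ]
    nlinarith
  have h8 := Complex.norm_log_one_add_half_le_self (hζ'.trans (by norm_num))
  rw [← sub_eq_add_neg, ← hlog] at h8
  simp only [norm_mul Complex.I z, Complex.norm_I, one_mul] at h8
  linarith

lemma norm_log_argument_le {a N : ℝ} (ha : 0 < a) (hN : 0 ≤ N) {z : ℂ} (hz : ‖z‖ ≤ 1) :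
    ‖Complex.I * a * (N + z)‖ ≤ a * (N + 1) := by
  have h := norm_add_le (N : ℂ) z
  rw [Complex.norm_real, Real.norm_of_nonneg hN] at h
  simp only [norm_mul, Complex.norm_I, one_mul, Complex.norm_real, Real.norm_of_nonneg ha.le]
  gcongr
  linarith

lemma log_map_lipschitz {a N : ℝ} (ha : 0 < a) (hN : 0 ≤ N) (haN : a * (N + 1) ≤ 1 / 4) {z w : ℂ}
    (hz : ‖z‖ ≤ 1) (hw : ‖w‖ ≤ 1) :
    ‖Complex.log (1 - Complex.I * a * (N + z)) - Complex.log (1 - Complex.I * a * (N + w))‖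
      ≤ 1 / 2 * ‖z - w‖ := by
  have h1 := norm_log_argument_le ha hN hz
  have h2 := norm_log_argument_le ha hN hw
  refine (norm_log_sub_log_le ?_ ?_).trans ?_
  · rw [sub_sub_cancel_left, norm_neg]; linarith
  · rw [sub_sub_cancel_left, norm_neg]; linarith
  · have : (1 - Complex.I * a * (N + z)) - (1 - Complex.I * a * (N + w))
        = -(Complex.I * a * (z - w)) := by ring
    rw [this]
    simp only [norm_neg, norm_mul, Complex.norm_I, one_mul, Complex.norm_real,
      Real.norm_of_nonneg ha.le]
    nlinarith [norm_nonneg (z - w), mul_nonneg ha.le hN]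

lemma strip_zero_unique {a N : ℝ} (ha : 0 < a) (hN : π ≤ N) (haN : a * (N + 1) ≤ 1 / 4) {z w : ℂ}
    (hz₁ : -π < z.re) (hz₂ : z.re < 0)
    (hz : Complex.exp (Complex.I * z) = 1 - Complex.I * a * (N + z))
    (hw₁ : -π < w.re) (hw₂ : w.re < 0)
    (hw : Complex.exp (Complex.I * w) = 1 - Complex.I * a * (N + w)) : z = w := by
  obtain ⟨hz3, hz4⟩ := strip_zero_bounds ha hN haN hz₁ hz₂ hz
  obtain ⟨hw3, hw4⟩ := strip_zero_bounds ha hN haN hw₁ hw₂ hw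
  have h := log_map_lipschitz ha (Real.pi_pos.le.trans hN) haN hz4 hw4
  rw [← hz3, ← hw3, ← mul_sub, norm_mul, Complex.norm_I, one_mul] at h
  have h0 : ‖z - w‖ = 0 := by linarith [norm_nonneg (z - w)]
  exact sub_eq_zero.mp (norm_eq_zero.mp h0)

lemma strip_zero_exists {a N : ℝ} (ha : 0 < a) (hN : π ≤ N) (haN : a * (N + 1) ≤ 1 / 4) :
    ∃ z : ℂ, -π < z.re ∧ z.re < 0 ∧
      Complex.exp (Complex.I * z) = 1 - Complex.I * a * (N + z) := by
  have hpi := Real.pi_gt_three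
  have hN0 : 0 ≤ N := by linarith
  let G : ℂ → ℂ := fun z => -Complex.I * Complex.log (1 - Complex.I * a * (N + z))
  have hmaps : Set.MapsTo G (Metric.closedBall 0 1) (Metric.closedBall 0 1) := by
    intro z hz
    rw [mem_closedBall_zero_iff] at hz ⊢
    have h1 := norm_log_argument_le ha hN0 hz
    have h2 := Complex.norm_log_one_add_half_le_self (z := -(Complex.I * a * (N + z)))
      (by rw [norm_neg]; linarith)
    rw [← sub_eq_add_neg, norm_neg] at h2
    simp only [G, norm_mul (-Complex.I), norm_neg, Complex.norm_I, one_mul]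
    linarith
  have hcontr : ContractingWith (1 / 2 : NNReal) (hmaps.restrict G _ _) := by
    refine ⟨by rw [← NNReal.coe_lt_coe]; norm_num, LipschitzWith.of_dist_le_mul ?_⟩
    rintro ⟨z, hz⟩ ⟨w, hw⟩
    rw [mem_closedBall_zero_iff] at hz hw
    simp only [Subtype.dist_eq, Set.MapsTo.val_restrict_apply, dist_eq_norm, G]
    rw [← mul_sub, norm_mul, norm_neg, Complex.norm_I, one_mul]
    simpa using log_map_lipschitz ha hN0 haN hz hw
  obtain ⟨z, hzmem, hfix, -⟩ := hcontr.exists_fixedPoint' (x := 0)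
    Metric.isClosed_closedBall.isComplete hmaps (by simp) (edist_ne_top _ _)
  rw [mem_closedBall_zero_iff] at hzmem
  have hζ := norm_log_argument_le ha hN0 hzmem
  have hlog : Complex.I * z = Complex.log (1 - Complex.I * a * (N + z)) := by
    have h : -Complex.I * Complex.log (1 - Complex.I * a * (N + z)) = z := hfix
    linear_combination -Complex.I * h
      - Complex.log (1 - Complex.I * a * (N + z)) * Complex.I_mul_I
  have hre : z.re = Complex.arg (1 - Complex.I * a * (N + z)) := by
    have := congrArg Complex.im hlog
    simpa [Complex.log_im] using this
  have hzre := (abs_le.mp ((Complex.abs_re_le_norm z).trans hzmem))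
  refine ⟨z, by linarith, ?_, ?_⟩
  · rw [hre, Complex.arg_neg_iff]
    simp
    nlinarith
  · rw [hlog, Complex.exp_log]
    intro h0
    rw [← sub_eq_zero.mp h0, norm_one] at hζ
    linarith

lemma strip_zero_expansion {a N : ℝ} (ha : 0 < a) (hN : π ≤ N) (haN : a * (N + 1) ≤ 1 / 4) {z : ℂ}
    (h₁ : -π < z.re) (h₂ : z.re < 0)
    (hz : Complex.exp (Complex.I * z) = 1 - Complex.I * a * (N + z)) :
    ‖z - (-a * N + a ^ 2 * N - Complex.I * a ^ 2 * N ^ 2 / 2)‖ ≤ 6 * (N + 1) ^ 3 * a ^ 3 := by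
  obtain ⟨hlog, hz1⟩ := strip_zero_bounds ha hN haN h₁ h₂ hz
  have hpi := Real.pi_gt_three
  have hN0 : 0 ≤ N := by linarith
  have hζ := norm_log_argument_le ha hN0 hz1
  have hζ2 : ‖-(Complex.I * a * (N + z))‖ ≤ a * (N + 1) := by rwa [norm_neg]
  set K := N + 1 with hK
  have hz2 : ‖z‖ ≤ 2 * (a * K) := by
    have h := Complex.norm_log_one_add_half_le_self (hζ2.trans (by linarith))
    rw [← sub_eq_add_neg, ← hlog, norm_mul, Complex.norm_I, one_mul] at h
    linarith [norm_nonneg (-(Complex.I * a * (N + z)))]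
  have hT : Complex.logTaylor 3 (-(Complex.I * a * (N + z)))
      = -(Complex.I * a * (N + z)) - (Complex.I * a * (N + z)) ^ 2 / 2 := by
    simp [Complex.logTaylor_succ, Complex.logTaylor_zero]
    ring
  have hE := Complex.norm_log_sub_logTaylor_le 2 (z := -(Complex.I * a * (N + z))) (by linarith)
  rw [hT, ← sub_eq_add_neg, ← hlog] at hE
  set E := Complex.I * z - (-(Complex.I * a * (N + z)) - (Complex.I * a * (N + z)) ^ 2 / 2) with hEdef
  have hEle : ‖E‖ ≤ (a * K) ^ 3 := by
    refine hE.trans ?_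
    have h3 : (1 - ‖-(Complex.I * a * (N + z))‖)⁻¹ ≤ 2 := by
      rw [inv_le_comm₀ (by linarith) (by norm_num)]; linarith
    have h4 : ‖-(Complex.I * a * (N + z))‖ ^ (2 + 1) ≤ (a * K) ^ 3 := by
      gcongr
    have h5 := mul_le_mul h4 h3 (inv_nonneg.mpr (by linarith)) (by positivity)
    have h6 : 0 ≤ (a * K) ^ 3 := by positivity
    push_cast
    linarith
  have hfirst : z + a * N = -(a * z) - Complex.I * (a ^ 2 * ((N + z) * (N + z))) / 2
      - Complex.I * E := by
    rw [hEdef]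
    linear_combination (z + a * (N + z) + Complex.I * a ^ 2 * (N + z) ^ 2 / 2) * Complex.I_sq
  have hsecond : z - (-a * N + a ^ 2 * N - Complex.I * a ^ 2 * N ^ 2 / 2)
      = -(a * (z + a * N)) - Complex.I * (a ^ 2 * (z * (2 * N + z))) / 2 - Complex.I * E := by
    linear_combination hfirst
  have hna : ‖(a : ℂ)‖ = a := by rw [Complex.norm_real, Real.norm_of_nonneg ha.le]
  have hnN : ‖(N : ℂ)‖ = N := by rw [Complex.norm_real, Real.norm_of_nonneg hN0]
  have hb1 : ‖(N : ℂ) + z‖ ≤ K := (norm_add_le _ _).trans (by linarith)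
  have hb2 : ‖2 * (N : ℂ) + z‖ ≤ 2 * K := by
    refine (norm_add_le _ _).trans ?_
    rw [norm_mul, hnN, Complex.norm_ofNat]; linarith
  have hK1 : 1 ≤ K := by linarith
  have haK : 0 < a * K := by positivity
  have hfn : ‖z + a * N‖ ≤ 3 * (a * K) ^ 2 := by
    rw [hfirst]
    refine (norm_sub_le _ _).trans ((add_le_add_left (norm_sub_le _ _) _).trans ?_)
    simp only [norm_neg, norm_mul, norm_div, norm_pow, Complex.norm_I, one_mul, hna,
      Complex.norm_ofNat]
    have e1 : a * ‖z‖ ≤ 2 * (a * K) ^ 2 := by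
      calc a * ‖z‖ ≤ (a * K) * (2 * (a * K)) := by
            gcongr
            nlinarith
        _ = _ := by ring
    have e2 : a ^ 2 * (‖(N : ℂ) + z‖ * ‖(N : ℂ) + z‖) ≤ (a * K) ^ 2 := by
      calc _ ≤ a ^ 2 * (K * K) := by gcongr
        _ = _ := by ring
    have e3 : (a * K) ^ 3 ≤ 1 / 4 * (a * K) ^ 2 := by nlinarith [sq_nonneg (a * K)]
    nlinarith [sq_nonneg (a * K)]
  rw [hsecond]
  refine (norm_sub_le _ _).trans ((add_le_add_left (norm_sub_le _ _) _).trans ?_)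
  simp only [norm_neg, norm_mul, norm_div, norm_pow, Complex.norm_I, one_mul, hna,
    Complex.norm_ofNat]
  have e1 : a * ‖z + a * N‖ ≤ 3 * (a * K) ^ 3 := by
    calc a * ‖z + a * N‖ ≤ (a * K) * (3 * (a * K) ^ 2) := by
          gcongr
          nlinarith
      _ = _ := by ring
  have e2 : a ^ 2 * (‖z‖ * ‖2 * (N : ℂ) + z‖) ≤ 4 * (a * K) ^ 3 := by
    calc _ ≤ a ^ 2 * (2 * (a * K) * (2 * K)) := by gcongr
      _ = 4 * a ^ 3 * K ^ 2 * 1 := by ring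
      _ ≤ 4 * a ^ 3 * K ^ 2 * K := by gcongr
      _ = _ := by ring
  calc _ ≤ 3 * (a * K) ^ 3 + 4 * (a * K) ^ 3 / 2 + (a * K) ^ 3 := by gcongr
    _ = _ := by ring

/-- In the rescaled variable `z = t w - (n + 1) π`, both parities give the same equation. -/
lemma F_eq_zero_iff {s t : ℝ} (hs : 0 < s) (ht : 0 < t) (n : ℕ) {w : ℂ} (hw : w ≠ 0) :
    (if Even n then Fplus s t w else Fminus s t w) = 0 ↔
      Complex.exp (Complex.I * (t * w - ((n + 1) * π : ℝ)))
        = 1 - Complex.I * (s / t : ℝ) * (((n + 1) * π : ℝ) + (t * w - ((n + 1) * π : ℝ))) := by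
  have hs' : (s : ℂ) ≠ 0 := by exact_mod_cast hs.ne'
  have ht' : (t : ℂ) ≠ 0 := by exact_mod_cast ht.ne'
  have hpow : Complex.exp (Complex.I * ((n + 1) * π : ℝ)) = (-1) ^ (n + 1) := by
    rw [← Complex.exp_pi_mul_I, ← Complex.exp_nat_mul]
    congr 1
    push_cast
    ring
  have hR : 1 - Complex.I * (s / t : ℝ) * (((n + 1) * π : ℝ) + (t * w - ((n + 1) * π : ℝ)))
      = 1 - Complex.I * (s * w) := by
    push_cast
    field_simp
    ring
  have hF : (if Even n then Fplus s t w else Fminus s t w) * (s * w)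
      = s * w + Complex.I * (1 + (-1) ^ n * Complex.exp (Complex.I * t * w)) := by
    split_ifs with h
    · rw [h.neg_one_pow, Fplus]; field_simp
    · rw [(Nat.not_even_iff_odd.mp h).neg_one_pow, Fminus]; field_simp; ring
  have hsq : ((-1 : ℂ) ^ n) * (-1) ^ n = 1 := by rw [← mul_pow]; simp
  rw [hR, mul_sub, Complex.exp_sub, hpow, pow_succ, ← mul_assoc]
  rw [← mul_eq_zero_iff_right (mul_ne_zero hs' hw), hF]
  rw [div_eq_iff (by simp)]
  constructor
  · intro h
    linear_combination -Complex.I * (-1) ^ n * h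
      + (-1) ^ n * (1 + (-1) ^ n * Complex.exp (Complex.I * t * w)) * Complex.I_sq
      - Complex.exp (Complex.I * t * w) * hsq
  · intro h
    linear_combination Complex.I * (-1) ^ n * h - Complex.I * (1 - Complex.I * (s * w)) * hsq
      + s * w * Complex.I_sq

/-- Second-order perturbative location of the unique zero with real part in
`(nπ/t, (n+1)π/t)` of `F₊` (`n` even) or `F₋` (`n` odd), for small `s > 0`:
`w(s) = w̄ₙ(1 − s/t + (s/t)² − i(s²/(2t))w̄ₙ) + O(s³)` with `w̄ₙ = (n+1)π/t`. -/
theorem stmt3 (t : ℝ) (ht : 0 < t) (n : ℕ) :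
    ∃ sn > (0 : ℝ), ∃ C > (0 : ℝ), ∀ s : ℝ, 0 < s → s < sn →
      (∃! w : ℂ, (n * π / t < w.re ∧ w.re < (n + 1) * π / t) ∧
        (if Even n then Fplus s t w else Fminus s t w) = 0) ∧
      (∀ w : ℂ, (n * π / t < w.re ∧ w.re < (n + 1) * π / t) →
        (if Even n then Fplus s t w else Fminus s t w) = 0 →
        ‖w - (((n + 1) * π / t : ℝ) : ℂ) *
            (1 - (s / t : ℝ) + ((s / t : ℝ)) ^ 2
              - Complex.I * ((s ^ 2 / (2 * t) : ℝ)) * (((n + 1) * π / t : ℝ) : ℂ))‖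
          ≤ C * s ^ 3) := by
  set N : ℝ := (n + 1) * π with hNdef
  have hN : π ≤ N := by
    rw [hNdef]; nlinarith [Real.pi_pos, (Nat.cast_nonneg n : (0 : ℝ) ≤ n)]
  have hN1 : 0 < N + 1 := by linarith [Real.pi_pos]
  have ht' : (t : ℂ) ≠ 0 := by exact_mod_cast ht.ne'
  refine ⟨t / (4 * (N + 1)), by positivity, 6 * (N + 1) ^ 3 / t ^ 4, by positivity, ?_⟩
  intro s hs hsn
  have ha : 0 < s / t := by positivity
  have haN : s / t * (N + 1) ≤ 1 / 4 := by
    rw [lt_div_iff₀ (by positivity)] at hsn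
    rw [div_mul_eq_mul_div, div_le_iff₀ ht]
    linarith
  have hstrip : ∀ w : ℂ, (n * π / t < w.re ∧ w.re < N / t) ↔
      (-π < (t * w - N : ℂ).re ∧ (t * w - N : ℂ).re < 0) := by
    intro w
    simp only [Complex.sub_re, Complex.re_ofReal_mul, Complex.ofReal_re]
    rw [div_lt_iff₀ ht, lt_div_iff₀ ht]
    constructor <;> rintro ⟨h1, h2⟩ <;> constructor <;> linarith
  have hne : ∀ w : ℂ, (n * π / t < w.re ∧ w.re < N / t) → w ≠ 0 := by
    rintro w ⟨h, -⟩ rfl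
    rw [Complex.zero_re] at h
    exact absurd h (not_lt.mpr (by positivity))
  refine ⟨?_, ?_⟩
  · obtain ⟨z, h1, h2, hz⟩ := strip_zero_exists ha hN haN
    have hzw : (t : ℂ) * ((N + z) / t) - N = z := by field_simp; ring
    have hmem := (hstrip ((N + z) / t)).mpr (by rw [hzw]; exact ⟨h1, h2⟩)
    refine ⟨(N + z) / t, ⟨hmem, (F_eq_zero_iff hs ht n (hne _ hmem)).mpr ?_⟩, ?_⟩
    · rw [← hNdef, hzw]; exact hz
    · rintro w ⟨hw, hFw⟩
      have hw2 := (F_eq_zero_iff hs ht n (hne _ hw)).mp hFw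
      rw [← hNdef] at hw2
      obtain ⟨hw3, hw4⟩ := (hstrip w).mp hw
      have := strip_zero_unique ha hN haN hw3 hw4 hw2 h1 h2 hz
      rw [← this]
      field_simp
      ring
  · intro w hw hFw
    have hw2 := (F_eq_zero_iff hs ht n (hne _ hw)).mp hFw
    rw [← hNdef] at hw2
    obtain ⟨hw3, hw4⟩ := (hstrip w).mp hw
    have h := strip_zero_expansion ha hN haN hw3 hw4 hw2
    have key : w - ((N / t : ℝ) : ℂ) * (1 - (s / t : ℝ) + ((s / t : ℝ)) ^ 2
          - Complex.I * ((s ^ 2 / (2 * t) : ℝ)) * ((N / t : ℝ) : ℂ))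
        = (t * w - N - (-(s / t : ℝ) * N + (s / t : ℝ) ^ 2 * N
          - Complex.I * (s / t : ℝ) ^ 2 * N ^ 2 / 2)) / t := by
      push_cast
      field_simp
      ring
    rw [key, norm_div, Complex.norm_real, Real.norm_of_nonneg ht.le, div_le_iff₀ ht]
    refine h.trans_eq ?_
    field_simp
end

section
/- For every real b > 0 and every w ∈ ℂ, one has √((b|w|)² + 1) · sinh(|Im w|) ≤ |g_b(w)| ≤ (b|w| + 1) · cosh(|Im w|). -/
/-- `g_b(w) = sin(w) + b·w·cos(w)` -/
noncomputable def gb (b : ℝ) (w : ℂ) : ℂ :=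
  Complex.sin w + (b : ℂ) * w * Complex.cos w

theorem Complex.normSq_sin (w : ℂ) :
    Complex.normSq (Complex.sin w) = Real.sin w.re ^ 2 + Real.sinh w.im ^ 2 := by
  rw [Complex.sin_eq w, Complex.normSq_apply]
  simp only [← Complex.ofReal_sin, ← Complex.ofReal_cos, ← Complex.ofReal_sinh,
    ← Complex.ofReal_cosh, Complex.add_re, Complex.add_im, Complex.mul_re, Complex.mul_im,
    Complex.ofReal_re, Complex.ofReal_im, Complex.I_re, Complex.I_im]
  linear_combination Real.sin w.re ^ 2 * Real.cosh_sq w.im +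
    Real.sinh w.im ^ 2 * Real.sin_sq_add_cos_sq w.re

theorem Complex.normSq_cos (w : ℂ) :
    Complex.normSq (Complex.cos w) = Real.cos w.re ^ 2 + Real.sinh w.im ^ 2 := by
  rw [Complex.cos_eq w, Complex.normSq_apply]
  simp only [← Complex.ofReal_sin, ← Complex.ofReal_cos, ← Complex.ofReal_sinh,
    ← Complex.ofReal_cosh, Complex.sub_re, Complex.sub_im, Complex.mul_re, Complex.mul_im,
    Complex.ofReal_re, Complex.ofReal_im, Complex.I_re, Complex.I_im]
  linear_combination Real.cos w.re ^ 2 * Real.cosh_sq w.im +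
    Real.sinh w.im ^ 2 * Real.sin_sq_add_cos_sq w.re

theorem Complex.norm_sin_le_cosh_im (w : ℂ) : ‖Complex.sin w‖ ≤ Real.cosh w.im := by
  refine le_of_sq_le_sq ?_ (Real.cosh_pos _).le
  rw [Complex.sq_norm, Complex.normSq_sin, Real.cosh_sq]
  linarith [Real.sin_sq_le_one w.re]

theorem Complex.norm_cos_le_cosh_im (w : ℂ) : ‖Complex.cos w‖ ≤ Real.cosh w.im := by
  refine le_of_sq_le_sq ?_ (Real.cosh_pos _).le
  rw [Complex.sq_norm, Complex.normSq_cos, Real.cosh_sq]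
  linarith [Real.cos_sq_le_one w.re]

theorem normSq_gb (b : ℝ) (w : ℂ) :
    Complex.normSq (gb b w) = ((b * ‖w‖) ^ 2 + 1) * Real.sinh w.im ^ 2 +
      (Real.sin w.re + b * w.re * Real.cos w.re) ^ 2 + (b * w.im * Real.cos w.re) ^ 2 +
      2 * b * (w.im * Real.sinh w.im) * Real.cosh w.im := by
  rw [gb, mul_pow, Complex.sq_norm, Complex.sin_eq w, Complex.cos_eq w, Complex.normSq_apply,
    Complex.normSq_apply]
  simp only [← Complex.ofReal_sin, ← Complex.ofReal_cos, ← Complex.ofReal_sinh,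
    ← Complex.ofReal_cosh, Complex.add_re, Complex.add_im, Complex.sub_re, Complex.sub_im,
    Complex.mul_re, Complex.mul_im,
    Complex.ofReal_re, Complex.ofReal_im, Complex.I_re, Complex.I_im]
  linear_combination
    (Real.sin w.re ^ 2 + b ^ 2 * (w.re ^ 2 + w.im ^ 2) * Real.cos w.re ^ 2 +
      2 * b * w.re * Real.sin w.re * Real.cos w.re) * Real.cosh_sq w.im +
    (Real.sinh w.im ^ 2 * (1 + b ^ 2 * (w.re ^ 2 + w.im ^ 2)) +
      2 * b * w.im * Real.sinh w.im * Real.cosh w.im) * Real.sin_sq_add_cos_sq w.re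

theorem Real.mul_sinh_self_nonneg (y : ℝ) : 0 ≤ y * Real.sinh y := by
  rcases le_total 0 y with h | h
  · exact mul_nonneg h (Real.sinh_nonneg_iff.2 h)
  · exact mul_nonneg_of_nonpos_of_nonpos h (Real.sinh_nonpos_iff.2 h)

/-- Growth bounds for `g_b` away from the real axis:
`√((b|w|)² + 1)·sinh|Im w| ≤ |g_b(w)| ≤ (b|w| + 1)·cosh|Im w|`. -/
theorem stmt4 (b : ℝ) (hb : 0 < b) (w : ℂ) :
    Real.sqrt ((b * ‖w‖) ^ 2 + 1) * Real.sinh |w.im| ≤ ‖gb b w‖ ∧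
      ‖gb b w‖ ≤ (b * ‖w‖ + 1) * Real.cosh |w.im| := by
  constructor
  · refine le_of_sq_le_sq ?_ (norm_nonneg _)
    rw [mul_pow, Real.sq_sqrt (by positivity), ← Real.abs_sinh, sq_abs, Complex.sq_norm,
      normSq_gb]
    have := Real.mul_sinh_self_nonneg w.im
    have := Real.cosh_pos w.im
    have : 0 ≤ 2 * b * (w.im * Real.sinh w.im) * Real.cosh w.im := by positivity
    linarith [sq_nonneg (Real.sin w.re + b * w.re * Real.cos w.re),
      sq_nonneg (b * w.im * Real.cos w.re)]
  · rw [Real.cosh_abs]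
    calc ‖gb b w‖ ≤ ‖Complex.sin w‖ + ‖(b : ℂ) * w * Complex.cos w‖ := norm_add_le _ _
      _ = ‖Complex.sin w‖ + b * ‖w‖ * ‖Complex.cos w‖ := by
        rw [norm_mul, norm_mul, Complex.norm_of_nonneg hb.le]
      _ ≤ Real.cosh w.im + b * ‖w‖ * Real.cosh w.im := by
        gcongr
        · exact Complex.norm_sin_le_cosh_im w
        · exact Complex.norm_cos_le_cosh_im w
      _ = (b * ‖w‖ + 1) * Real.cosh w.im := by ring
end

section
/- Fix real κ > 0 and η > 0, and set c = 3π/4. There exists l₀ > κ such that for every l > l₀ the following holds: if w ∈ ℂ, w ∉ (−∞, 0], D̂_l(w) = 0, and φ ∈ (−π, π) is the principal argument of w, then, writing r = |w|² (so that z = w² has modulus r and argument θ = 2φ ∈ (−2π, 2π)), either 0 > 2φ > −c·l⁻¹·r^{−1/2}·log(l + r) or −2π < 2φ < −2π + c·l⁻¹·r^{−1/2}·log(l + r) (log denotes the natural logarithm). -/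
open Real

/-- The resonance determinant `D̂_l(w)` of the Hamiltonian
`p² + η⁻¹(δ_κ + δ_{−κ})` on `L²((−∞, l))` with a Dirichlet boundary condition
at `l`, in the variable `w = √z`. -/
noncomputable def Dhat (κ η l : ℝ) (w : ℂ) : ℂ :=
  1 + Complex.I * (1 - Complex.exp (2 * Complex.I * l * w) * Complex.cos (2 * κ * w)) / (η * w)
    - Complex.exp (Complex.I * (κ + l) * w) * Complex.sin ((κ - l) * w) * Complex.sin (2 * κ * w)
        / (η ^ 2 * w ^ 2)

/-- A zero `w ≠ 0` of `Dhat` satisfies a relation of the form `G (s - B q) = s² - B`, in which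
`G` and `B` are exponentials and `q = 2 - s`. -/
theorem exp_mul_eq_of_Dhat_eq_zero {κ η l : ℝ} (hη : 0 < η) {w : ℂ} (hw : w ≠ 0)
    (h : Dhat κ η l w = 0) :
    Complex.exp (2 * Complex.I * (l - κ) * w) *
        ((1 - 2 * Complex.I * η * w) -
          Complex.exp (4 * Complex.I * κ * w) * (2 - (1 - 2 * Complex.I * η * w))) =
      (1 - 2 * Complex.I * η * w) ^ 2 - Complex.exp (4 * Complex.I * κ * w) := by
  have hη' : (η : ℂ) ≠ 0 := by exact_mod_cast hη.ne'
  have hI : Complex.I ^ 2 = -1 := Complex.I_sq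
  set P := Complex.exp (Complex.I * κ * w) with hP
  set Q := Complex.exp (Complex.I * l * w) with hQ
  have hP0 : P ≠ 0 := Complex.exp_ne_zero _
  have hQ0 : Q ≠ 0 := Complex.exp_ne_zero _
  have exp_two_l : Complex.exp (2 * Complex.I * l * w) = Q ^ 2 := by
    rw [hQ, ← Complex.exp_nat_mul]; congr 1; push_cast; ring
  have exp_four_κ : Complex.exp (4 * Complex.I * κ * w) = P ^ 4 := by
    rw [hP, ← Complex.exp_nat_mul]; congr 1; push_cast; ring
  have exp_add : Complex.exp (Complex.I * (κ + l) * w) = P * Q := by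
    rw [hP, hQ, ← Complex.exp_add]; congr 1; ring
  have exp_two_sub : Complex.exp (2 * Complex.I * (l - κ) * w) = Q ^ 2 / P ^ 2 := by
    rw [hP, hQ, ← Complex.exp_nat_mul, ← Complex.exp_nat_mul, ← Complex.exp_sub]
    congr 1; push_cast; ring
  have exp_pos : Complex.exp (2 * κ * w * Complex.I) = P ^ 2 := by
    rw [hP, ← Complex.exp_nat_mul]; congr 1; push_cast; ring
  have exp_neg : Complex.exp (-(2 * κ * w) * Complex.I) = (P ^ 2)⁻¹ := by
    rw [← exp_pos, ← Complex.exp_neg]; congr 1; ring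
  have exp_sub : Complex.exp ((κ - l) * w * Complex.I) = P / Q := by
    rw [hP, hQ, ← Complex.exp_sub]; congr 1; ring
  have exp_neg_sub : Complex.exp (-((κ - l) * w) * Complex.I) = Q / P := by
    rw [hP, hQ, ← Complex.exp_sub]; congr 1; ring
  unfold Dhat at h
  rw [Complex.sin, Complex.sin, Complex.cos, exp_two_l, exp_add, exp_pos, exp_neg, exp_sub,
    exp_neg_sub] at h
  rw [exp_two_sub, exp_four_κ]
  field_simp at h ⊢
  generalize Complex.I = J at *
  clear_value P Q
  grind

/-- The reflection coefficient of two repulsive point interactions has modulus less than one. -/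
theorem norm_sub_mul_lt_norm_sq_sub {s B : ℂ} (hs : 1 ≤ s.re) (hs1 : 1 < ‖s‖) (hB : ‖B‖ ≤ 1) :
    ‖s - B * (2 - s)‖ < ‖s ^ 2 - B‖ := by
  have key : ‖s ^ 2 - B‖ ^ 2 - ‖s - B * (2 - s)‖ ^ 2 =
      (‖s‖ ^ 2) ^ 2 - ‖s‖ ^ 2 + ‖B‖ ^ 2 * (1 - ‖s‖ ^ 2 + 4 * (s.re - 1))
        - 4 * (s.re - 1) * (B.re * s.re + B.im * s.im) := by
    simp only [Complex.sq_norm]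
    simp only [Complex.normSq_apply, pow_two, Complex.sub_re, Complex.sub_im,
      Complex.mul_re, Complex.mul_im, Complex.re_ofNat, Complex.im_ofNat]
    ring
  have inner_le : B.re * s.re + B.im * s.im ≤ ‖B‖ * ‖s‖ := by
    refine (abs_le_of_sq_le_sq' ?_ (by positivity)).2
    rw [mul_pow, Complex.sq_norm, Complex.sq_norm, Complex.normSq_apply, Complex.normSq_apply]
    nlinarith [sq_nonneg (B.re * s.im - B.im * s.re)]
  have re_le : s.re ≤ ‖s‖ := Complex.re_le_norm s
  have b_nonneg : 0 ≤ ‖B‖ := norm_nonneg B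
  generalize ‖s‖ = m at *
  generalize ‖B‖ = b at *
  generalize s.re = a at *
  have at_one : 0 < (m ^ 2 - 1) ^ 2 - 4 * (a - 1) * (m - 1) := by
    have : 0 < (m - 1) ^ 2 * ((m + 1) ^ 2 - 4) :=
      mul_pos (by nlinarith) (by nlinarith)
    nlinarith [mul_nonneg (sub_nonneg.2 re_le) (sub_nonneg.2 hs1.le)]
  have slope : 0 ≤ 4 * (a - 1) * m - (1 + b) * (1 - m ^ 2 + 4 * (a - 1)) := by
    rcases le_total 0 (1 - m ^ 2 + 4 * (a - 1)) with h | h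
    · have : 0 ≤ 4 * (a - 1) * m - 2 * (1 - m ^ 2 + 4 * (a - 1)) := by
        rcases le_total m 2 with h2 | h2
        · nlinarith [mul_nonneg (sub_nonneg.2 re_le) (sub_nonneg.2 h2), sq_nonneg (m - 1)]
        · nlinarith [mul_nonneg (sub_nonneg.2 hs) (sub_nonneg.2 h2)]
      nlinarith
    · have : 0 ≤ 4 * (a - 1) * m := mul_nonneg (by linarith) (by linarith)
      nlinarith
  have decrease := mul_nonneg (sub_nonneg.2 hB) slope
  have cross := mul_le_mul_of_nonneg_left inner_le (show 0 ≤ 4 * (a - 1) by linarith)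
  refine lt_of_pow_lt_pow_left₀ 2 (norm_nonneg _) ?_
  nlinarith

/-- `Dhat` has no zeros `w ≠ 0` in the closed upper half plane. -/
theorem im_neg_of_Dhat_eq_zero {κ η l : ℝ} (hκ : 0 < κ) (hη : 0 < η) (hl : κ < l) {w : ℂ}
    (hw : w ≠ 0) (h : Dhat κ η l w = 0) : w.im < 0 := by
  by_contra! him
  have heq := exp_mul_eq_of_Dhat_eq_zero hη hw h
  have s_re : (1 - 2 * Complex.I * η * w).re = 1 + 2 * η * w.im := by simp
  have s_im : (1 - 2 * Complex.I * η * w).im = -(2 * η * w.re) := by simp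
  have one_le_re : 1 ≤ (1 - 2 * Complex.I * η * w).re := by
    rw [s_re]; nlinarith [mul_nonneg hη.le him]
  have one_lt_norm : 1 < ‖1 - 2 * Complex.I * η * w‖ := by
    refine lt_of_pow_lt_pow_left₀ 2 (norm_nonneg _) ?_
    rw [Complex.sq_norm, Complex.normSq_apply, s_re, s_im]
    have hpos : 0 < w.re * w.re + w.im * w.im := by
      rw [← Complex.normSq_apply]; exact Complex.normSq_pos.2 hw
    nlinarith [mul_pos (mul_pos hη hη) hpos, mul_nonneg hη.le him]
  have norm_B_le : ‖Complex.exp (4 * Complex.I * κ * w)‖ ≤ 1 := by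
    rw [Complex.norm_exp, Real.exp_le_one_iff]
    simp; positivity
  have norm_G_le : ‖Complex.exp (2 * Complex.I * (l - κ) * w)‖ ≤ 1 := by
    rw [Complex.norm_exp, Real.exp_le_one_iff]
    have := mul_nonneg (sub_pos.2 hl).le him
    simp; linarith
  have hlt := norm_sub_mul_lt_norm_sq_sub one_le_re one_lt_norm norm_B_le
  rw [← heq, norm_mul] at hlt
  exact absurd (mul_le_of_le_one_left (norm_nonneg _) norm_G_le) (not_le.2 hlt)

/-- Zeros of `Dhat` in the lower half plane lie within `3 log (l + |w|²) / (4 l)` of the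
real axis. -/
theorem neg_im_lt_of_Dhat_eq_zero {κ η l : ℝ} (hκ : 0 < κ) (hη : 0 < η) (hl1 : 1 < l)
    (hl8 : 8 * κ < l) (hlog : (1 + 2 * η) / κ < Real.log l) {w : ℂ} (him : w.im < 0)
    (h : Dhat κ η l w = 0) : -w.im < 3 / 4 * Real.log (l + ‖w‖ ^ 2) / l := by
  by_contra! hle
  have hw : w ≠ 0 := by rintro rfl; simp at him
  have heq := exp_mul_eq_of_Dhat_eq_zero hη hw h
  have norm_B : ‖Complex.exp (4 * Complex.I * κ * w)‖ = Real.exp (4 * κ * -w.im) := by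
    rw [Complex.norm_exp]; simp
  have norm_G : ‖Complex.exp (2 * Complex.I * (l - κ) * w)‖ =
      Real.exp (2 * (l - κ) * -w.im) := by
    rw [Complex.norm_exp]; simp
  set s := 1 - 2 * Complex.I * η * w with hs
  have s_re : s.re = 1 + 2 * η * w.im := by simp [hs]
  have s_im : s.im = -(2 * η * w.re) := by simp [hs]
  have norm_s_le : ‖s‖ ≤ ‖2 - s‖ := by
    refine (sq_le_sq₀ (norm_nonneg _) (norm_nonneg _)).1 ?_
    rw [Complex.sq_norm, Complex.sq_norm, Complex.normSq_apply, Complex.normSq_apply]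
    simp only [Complex.sub_re, Complex.sub_im, Complex.re_ofNat, Complex.im_ofNat, s_re, s_im]
    nlinarith [mul_pos hη (neg_pos.2 him)]
  have one_le_norm : 1 ≤ ‖2 - s‖ := by
    refine le_trans ?_ (Complex.re_le_norm _)
    simp only [Complex.sub_re, Complex.re_ofNat, s_re]
    nlinarith [mul_pos hη (neg_pos.2 him)]
  have norm_le : ‖2 - s‖ ≤ 1 + 2 * η * ‖w‖ := by
    have : 2 - s = 1 + 2 * Complex.I * η * w := by rw [hs]; ring
    rw [this]
    refine (norm_add_le _ _).trans ?_
    simp [abs_of_pos hη]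
  have norm_s_nonneg : 0 ≤ ‖s‖ := norm_nonneg s
  have hlower : Real.exp (2 * (l - κ) * -w.im) * ((Real.exp (4 * κ * -w.im) - 1) * ‖2 - s‖) ≤
      ‖s‖ ^ 2 + Real.exp (4 * κ * -w.im) := by
    calc _ ≤ Real.exp (2 * (l - κ) * -w.im) *
          ‖s - Complex.exp (4 * Complex.I * κ * w) * (2 - s)‖ := by
          gcongr
          have := norm_sub_norm_le (Complex.exp (4 * Complex.I * κ * w) * (2 - s)) s
          rw [norm_mul, norm_B, norm_sub_rev (_ * _) s] at this
          linarith
      _ = ‖s ^ 2 - Complex.exp (4 * Complex.I * κ * w)‖ := by rw [← norm_G, ← norm_mul, heq]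
      _ ≤ _ := by
          refine (norm_sub_le _ _).trans ?_
          rw [norm_pow, norm_B]
  clear_value s
  have hw0 : 0 ≤ ‖w‖ := norm_nonneg w
  generalize ‖w‖ = R at *
  generalize ‖2 - s‖ = q at *
  generalize ‖s‖ = t at *
  have hy : 0 < -w.im := neg_pos.2 him
  generalize -w.im = y at *
  have hl0 : 0 < l := by linarith
  have l_le : l ≤ l + R ^ 2 := by nlinarith
  have sq_le : R ^ 2 ≤ l + R ^ 2 := by linarith
  generalize l + R ^ 2 = T at *
  have hT : 0 < T := hl0.trans_le l_le
  have one_le_sqrt : 1 ≤ √T := Real.one_le_sqrt.2 (by linarith)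
  have R_le_sqrt : R ≤ √T := Real.le_sqrt_of_sq_le sq_le
  rw [div_le_iff₀ hl0] at hle
  rw [div_lt_iff₀ hκ] at hlog
  have log_le : Real.log l ≤ Real.log T := Real.log_le_log hl0 l_le
  have hκly : 1 + 2 * η < 2 * κ * y * l := by nlinarith
  have T_le_exp : T ≤ Real.exp (4 / 3 * (l * y)) := by
    rw [← Real.log_le_iff_le_exp hT]; linarith
  have sqrt_le_exp : √T ≤ Real.exp (2 / 3 * (l * y)) := by
    refine Real.sqrt_le_iff.2 ⟨(Real.exp_pos _).le, T_le_exp.trans_eq ?_⟩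
    rw [← Real.exp_nat_mul]; congr 1; push_cast; ring
  have hly : 0 < l * y := mul_pos hl0 hy
  have exp_dominates_exp : Real.exp (4 * κ * y) < 2 * κ * y * Real.exp (2 * l * y) := by
    calc Real.exp (4 * κ * y) ≤ Real.exp (2 / 3 * (l * y)) := by
          rw [Real.exp_le_exp]; nlinarith
      _ < 2 * κ * y * l * Real.exp (2 / 3 * (l * y)) :=
          lt_mul_of_one_lt_left (Real.exp_pos _) (by linarith)
      _ ≤ 2 * κ * y * Real.exp (4 / 3 * (l * y)) * Real.exp (2 / 3 * (l * y)) := by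
          gcongr; exact l_le.trans T_le_exp
      _ = 2 * κ * y * Real.exp (2 * l * y) := by
          rw [mul_assoc, ← Real.exp_add]; ring_nf
  have exp_dominates_norm : q < 2 * κ * y * Real.exp (2 * l * y) := by
    calc q ≤ 1 + 2 * η * R := norm_le
      _ ≤ √T + 2 * η * √T := by gcongr
      _ = (1 + 2 * η) * √T := by ring
      _ < 2 * κ * y * l * √T := by gcongr
      _ ≤ 2 * κ * y * Real.exp (4 / 3 * (l * y)) * Real.exp (2 / 3 * (l * y)) := by
          gcongr; exact l_le.trans T_le_exp
      _ = 2 * κ * y * Real.exp (2 * l * y) := by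
          rw [mul_assoc, ← Real.exp_add]; ring_nf
  have hsinh : 2 * κ * y ≤ Real.sinh (2 * κ * y) := Real.self_le_sinh_iff.2 (by positivity)
  have exp_mul_sub : Real.exp (2 * (l - κ) * y) * (Real.exp (4 * κ * y) - 1) =
      Real.exp (2 * l * y) * (2 * Real.sinh (2 * κ * y)) := by
    rw [Real.sinh_eq, mul_div_cancel₀ _ two_ne_zero, mul_sub_one, mul_sub (Real.exp _),
      ← Real.exp_add, ← Real.exp_add, ← Real.exp_add]
    ring_nf
  rw [← mul_assoc, exp_mul_sub] at hlower
  have hlinear : (2 * κ * y * Real.exp (2 * l * y) + 2 * κ * y * Real.exp (2 * l * y)) * q ≤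
      Real.exp (2 * l * y) * (2 * Real.sinh (2 * κ * y)) * q := by
    gcongr
    nlinarith [Real.exp_pos (2 * l * y)]
  have t_sq_le : t ^ 2 ≤ q ^ 2 := by gcongr
  have hfirst := mul_lt_mul_of_pos_right exp_dominates_norm (show 0 < q by linarith)
  have hsecond := le_mul_of_one_le_right
    (show 0 ≤ 2 * κ * y * Real.exp (2 * l * y) by positivity) one_le_norm
  nlinarith

/-- For large `l`, all zeros of `D̂_l` (with `w` off the negative real axis,
`φ = Arg w`, `r = |w|²`, i.e. `z = w²` has argument `θ = 2φ ∈ (−2π, 2π)`)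
are localized near the rays `θ = 0` and `θ = −2π`, with `c = 3π/4`. -/
theorem stmt5 (κ η : ℝ) (hκ : 0 < κ) (hη : 0 < η) :
    ∃ l₀ > κ, ∀ l > l₀, ∀ w : ℂ,
      w ∉ {x : ℂ | x.im = 0 ∧ x.re ≤ 0} → Dhat κ η l w = 0 →
      ((0 > 2 * Complex.arg w ∧
          2 * Complex.arg w >
            -((3 * π / 4) * l⁻¹ * (‖w‖ ^ 2) ^ (-(1 : ℝ) / 2) *
              Real.log (l + ‖w‖ ^ 2))) ∨
       (-(2 * π) < 2 * Complex.arg w ∧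
          2 * Complex.arg w <
            -(2 * π) + (3 * π / 4) * l⁻¹ * (‖w‖ ^ 2) ^ (-(1 : ℝ) / 2) *
              Real.log (l + ‖w‖ ^ 2))) := by
  refine ⟨max (1 + 8 * κ) (Real.exp ((1 + 2 * η) / κ)), lt_max_of_lt_left (by linarith), ?_⟩
  intro l hl w hwslit h
  obtain ⟨hl8, hlexp⟩ := max_lt_iff.1 hl
  have hw : w ≠ 0 := by rintro rfl; simp at hwslit
  have hR : 0 < ‖w‖ := norm_pos_iff.2 hw
  have hlog : (1 + 2 * η) / κ < Real.log l := (Real.lt_log_iff_exp_lt (by linarith)).2 hlexp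
  have him := im_neg_of_Dhat_eq_zero hκ hη (by linarith) hw h
  have hstrip := neg_im_lt_of_Dhat_eq_zero hκ hη (by linarith) (by linarith) hlog him h
  have hpow : (‖w‖ ^ 2) ^ (-(1 : ℝ) / 2) = ‖w‖⁻¹ := by
    rw [← Real.rpow_natCast, ← Real.rpow_mul hR.le, ← Real.rpow_neg_one]
    norm_num
  have harg0 : Complex.arg w < 0 := Complex.arg_neg_iff.2 him
  have hargπ : -π < Complex.arg w := Complex.neg_pi_lt_arg w
  have hsin : Real.sin (Complex.arg w) = w.im / ‖w‖ := Complex.sin_arg w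
  have hbound : π * (-w.im / ‖w‖) <
      (3 * π / 4) * l⁻¹ * (‖w‖ ^ 2) ^ (-(1 : ℝ) / 2) * Real.log (l + ‖w‖ ^ 2) := by
    rw [hpow]
    calc π * (-w.im / ‖w‖) < π * (3 / 4 * Real.log (l + ‖w‖ ^ 2) / l / ‖w‖) := by gcongr
      _ = _ := by field_simp
  have jordan : ∀ x, 0 ≤ x → x ≤ π / 2 → 2 * x ≤ π * Real.sin x := fun x hx hx' => by
    have := mul_le_mul_of_nonneg_left (Real.mul_le_sin hx hx') pi_pos.le
    rwa [← mul_assoc, mul_div_cancel₀ _ pi_ne_zero] at this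
  rcases le_total (-(π / 2)) (Complex.arg w) with hcase | hcase
  · left
    have := jordan (-Complex.arg w) (by linarith) (by linarith)
    rw [Real.sin_neg, hsin, ← neg_div] at this
    exact ⟨by linarith, by linarith⟩
  · right
    have := jordan (Complex.arg w + π) (by linarith) (by linarith)
    rw [Real.sin_add_pi, hsin, ← neg_div] at this
    exact ⟨by linarith, by linarith⟩
end

section
/- Fix real κ > 0 and η > 0, and set c = 3π/2. There exist l₀ > κ and C > 0 (depending only on η and κ) such that for all l > l₀ and all w ∈ ℂ with w ≠ 0, writing φ for the principal argument of w, r = |w|², and φ₀ = (c/2)·l⁻¹·r^{−1/2}·log(l + r): (i) if −π + φ₀ < φ < −φ₀ then |D̂_l(w) − D₁(w)| < C·|D₁(w)|/log(l + r), where D₁(w) = −i·e^{2ilw}·g_{η/κ}(2κw)/(2η²w²); (ii) if π/2 ≤ φ ≤ π − φ₀ then |D̂_l(w) − D₂(w)| < C·|D₂(w)|/log(l + r), where D₂(w) = ((2ηw + i)² + e^{4iκw})/(4η²w²). (log denotes the natural logarithm.) -/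
open Real

/-- `φ₀ = (c/2)·l⁻¹·r^{−1/2}·log(l + r)` with `c = 3π/2` and `r = |w|²`. -/
noncomputable def phi0 (l : ℝ) (w : ℂ) : ℝ :=
  ((3 * π / 2) / 2) * l⁻¹ * (‖w‖ ^ 2) ^ (-(1 : ℝ) / 2) *
    Real.log (l + ‖w‖ ^ 2)

/-- `D₁(w) = −i·e^{2ilw}·g_{η/κ}(2κw)/(2η²w²)` -/
noncomputable def D1 (κ η l : ℝ) (w : ℂ) : ℂ :=
  -Complex.I * Complex.exp (2 * Complex.I * l * w) * gb (η / κ) (2 * κ * w) / (2 * η ^ 2 * w ^ 2)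

/-- `D₂(w) = ((2ηw + i)² + e^{4iκw})/(4η²w²)` -/
noncomputable def D2 (κ η : ℝ) (w : ℂ) : ℂ :=
  ((2 * η * w + Complex.I) ^ 2 + Complex.exp (4 * Complex.I * κ * w)) / (4 * η ^ 2 * w ^ 2)

/-- The numerator `(2ηw + i)² + e^{4iκw}` of `D₂`. -/
noncomputable def numD2 (κ η : ℝ) (w : ℂ) : ℂ :=
  (2 * η * w + Complex.I) ^ 2 + Complex.exp (4 * Complex.I * κ * w)

theorem Dhat_eq_D1_add_D2 {κ η : ℝ} (hκ : 0 < κ) (hη : 0 < η) (l : ℝ) {w : ℂ} (hw : w ≠ 0) :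
    Dhat κ η l w = D1 κ η l w + D2 κ η w := by
  have hκ' : (κ : ℂ) ≠ 0 := by exact_mod_cast hκ.ne'
  have hη' : (η : ℂ) ≠ 0 := by exact_mod_cast hη.ne'
  have hprod : Complex.exp (Complex.I * (κ + l) * w) * Complex.sin ((κ - l) * w)
      = (Complex.exp (2 * Complex.I * l * w) - Complex.exp (2 * Complex.I * κ * w))
        * Complex.I / 2 := by
    rw [Complex.sin]
    have h1 : Complex.exp (2 * Complex.I * l * w)
        = Complex.exp (Complex.I * (κ + l) * w) * Complex.exp (-((κ - l) * w) * Complex.I) := by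
      rw [← Complex.exp_add]; ring_nf
    have h2 : Complex.exp (2 * Complex.I * κ * w)
        = Complex.exp (Complex.I * (κ + l) * w) * Complex.exp ((κ - l) * w * Complex.I) := by
      rw [← Complex.exp_add]; ring_nf
    rw [h1, h2]; ring
  have hsin : Complex.exp (2 * Complex.I * κ * w) * Complex.sin (2 * κ * w)
      = (1 - Complex.exp (4 * Complex.I * κ * w)) * Complex.I / 2 := by
    rw [Complex.sin]
    have h1 : Complex.exp (2 * Complex.I * κ * w) * Complex.exp (-(2 * κ * w) * Complex.I) = 1 := by
      rw [← Complex.exp_add, ← Complex.exp_zero]; ring_nf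
    have h2 : Complex.exp (4 * Complex.I * κ * w)
        = Complex.exp (2 * Complex.I * κ * w) * Complex.exp (2 * κ * w * Complex.I) := by
      rw [← Complex.exp_add]; ring_nf
    rw [h2]; linear_combination (Complex.I / 2) * h1
  have hexpand : Complex.exp (Complex.I * (κ + l) * w) * Complex.sin ((κ - l) * w)
        * Complex.sin (2 * κ * w)
      = Complex.exp (2 * Complex.I * l * w) * Complex.sin (2 * κ * w) * Complex.I / 2
        + (1 - Complex.exp (4 * Complex.I * κ * w)) / 4 := by
    rw [hprod]
    linear_combination (-Complex.I / 2) * hsin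
      + (-(1 - Complex.exp (4 * Complex.I * κ * w)) / 4) * Complex.I_sq
  unfold Dhat D1 D2 gb
  rw [hexpand]
  push_cast
  field_simp
  linear_combination (-2 : ℂ) * Complex.I_sq

theorem two_mul_gb (κ η : ℝ) (hκ : 0 < κ) (w : ℂ) :
    2 * gb (η / κ) (2 * κ * w)
      = Complex.exp (2 * κ * w * Complex.I) * (2 * η * w - Complex.I)
        + Complex.exp (-(2 * κ * w) * Complex.I) * (2 * η * w + Complex.I) := by
  have hκ' : (κ : ℂ) ≠ 0 := by exact_mod_cast hκ.ne'
  unfold gb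
  rw [Complex.sin, Complex.cos]
  push_cast
  field_simp
  ring

theorem norm_exp_mul_I (w : ℂ) (a : ℝ) :
    ‖Complex.exp (2 * a * w * Complex.I)‖ = Real.exp (-(2 * a * w.im)) := by
  rw [Complex.norm_exp]; congr 1; simp

theorem norm_exp_neg_mul_I (w : ℂ) (a : ℝ) :
    ‖Complex.exp (-(2 * a * w) * Complex.I)‖ = Real.exp (2 * a * w.im) := by
  rw [Complex.norm_exp]; congr 1; simp

theorem norm_two_mul_add_I_le {η : ℝ} (hη : 0 < η) (w : ℂ) :
    ‖2 * (η : ℂ) * w + Complex.I‖ ≤ 2 * η * ‖w‖ + 1 := by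
  refine (norm_add_le _ _).trans ?_
  simp [abs_of_pos hη]

theorem norm_two_mul_sub_I_le {η : ℝ} (hη : 0 < η) (w : ℂ) :
    ‖2 * (η : ℂ) * w - Complex.I‖ ≤ 2 * η * ‖w‖ + 1 := by
  refine (norm_sub_le _ _).trans ?_
  simp [abs_of_pos hη]

theorem norm_gb_le_of_im_nonneg {κ η : ℝ} (hκ : 0 < κ) (hη : 0 < η) {w : ℂ} (hw : 0 ≤ w.im) :
    ‖gb (η / κ) (2 * κ * w)‖ ≤ Real.exp (2 * κ * w.im) * (2 * η * ‖w‖ + 1) := by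
  have h : ‖2 * gb (η / κ) (2 * κ * w)‖ ≤ Real.exp (-(2 * κ * w.im)) * (2 * η * ‖w‖ + 1)
      + Real.exp (2 * κ * w.im) * (2 * η * ‖w‖ + 1) := by
    rw [two_mul_gb κ η hκ w]
    refine (norm_add_le _ _).trans ?_
    rw [norm_mul, norm_mul, norm_exp_mul_I, norm_exp_neg_mul_I]
    gcongr
    · exact norm_two_mul_sub_I_le hη w
    · exact norm_two_mul_add_I_le hη w
  have hexp : Real.exp (-(2 * κ * w.im)) ≤ Real.exp (2 * κ * w.im) := by
    apply Real.exp_le_exp.2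
    have : 0 ≤ 2 * κ * w.im := by positivity
    linarith
  have hpos : 0 ≤ 2 * η * ‖w‖ + 1 := by positivity
  have hmul := mul_le_mul_of_nonneg_right hexp hpos
  rw [norm_mul, Complex.norm_two] at h
  linarith

theorem le_norm_gb_of_im_nonpos {κ η : ℝ} (hκ : 0 < κ) (hη : 0 < η) {w : ℂ} (hw : w.im ≤ 0) :
    2 * κ * (-w.im) ≤ ‖gb (η / κ) (2 * κ * w)‖ := by
  set y := -w.im with hy
  have hy0 : 0 ≤ y := by linarith
  have hle : ‖2 * (η : ℂ) * w + Complex.I‖ ≤ ‖2 * (η : ℂ) * w - Complex.I‖ := by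
    rw [Complex.norm_def, Complex.norm_def]
    apply Real.sqrt_le_sqrt
    simp only [Complex.normSq_apply, Complex.add_re, Complex.add_im, Complex.sub_re,
      Complex.sub_im, Complex.mul_re, Complex.mul_im, Complex.ofReal_re, Complex.ofReal_im,
      Complex.I_re, Complex.I_im, Complex.re_ofNat, Complex.im_ofNat]
    nlinarith [mul_nonneg hη.le hy0]
  have hone : 1 ≤ ‖2 * (η : ℂ) * w - Complex.I‖ := by
    refine le_trans ?_ (Complex.abs_im_le_norm _)
    have him : (2 * (η : ℂ) * w - Complex.I).im = -(2 * η * y + 1) := by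
      simp [hy]; ring
    rw [him, abs_neg, abs_of_nonneg (by positivity)]
    have : 0 ≤ 2 * η * y := by positivity
    linarith
  have hlow : Real.exp (2 * κ * y) * ‖2 * (η : ℂ) * w - Complex.I‖
      - Real.exp (-(2 * κ * y)) * ‖2 * (η : ℂ) * w + Complex.I‖
      ≤ 2 * ‖gb (η / κ) (2 * κ * w)‖ := by
    have h := norm_sub_le_norm_add
      (Complex.exp (2 * κ * w * Complex.I) * (2 * η * w - Complex.I))
      (Complex.exp (-(2 * κ * w) * Complex.I) * (2 * η * w + Complex.I))
    rw [← two_mul_gb κ η hκ w, norm_mul, norm_mul, norm_mul, norm_exp_mul_I, norm_exp_neg_mul_I,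
      Complex.norm_two] at h
    have e1 : -(2 * κ * w.im) = 2 * κ * y := by rw [hy]; ring
    have e2 : 2 * κ * w.im = -(2 * κ * y) := by rw [hy]; ring
    rwa [e1, e2] at h
  have h0 : 0 ≤ 2 * κ * y := by positivity
  have hexp : 4 * κ * y ≤ Real.exp (2 * κ * y) - Real.exp (-(2 * κ * y)) := by
    have := Real.self_le_sinh_iff.2 h0
    rw [Real.sinh_eq] at this
    linarith
  have hmul := mul_le_mul_of_nonneg_left hle (Real.exp_pos (-(2 * κ * y))).le
  nlinarith [mul_le_mul hexp hone zero_le_one (by linarith [mul_nonneg hκ.le hy0])]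

theorem norm_numD2_le {κ η : ℝ} (hη : 0 < η) (w : ℂ) :
    ‖numD2 κ η w‖ ≤ (2 * η * ‖w‖ + 1) ^ 2 + Real.exp (4 * κ * (-w.im)) := by
  unfold numD2
  refine (norm_add_le _ _).trans ?_
  rw [norm_pow]
  gcongr
  · exact norm_two_mul_add_I_le hη w
  · rw [Complex.norm_exp]
    apply le_of_eq; congr 1; simp

/-- In the upper half-plane both factors of
`(2ηw + i)² + e^{4iκw} = (2ηw + i - i e^{2iκw}) (2ηw + i + i e^{2iκw})`
have imaginary part at least `2η Im w`. -/
theorem le_norm_numD2_of_im_nonneg {κ η : ℝ} (hκ : 0 < κ) (hη : 0 < η) {w : ℂ} (hw : 0 ≤ w.im) :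
    (2 * η * w.im) ^ 2 ≤ ‖numD2 κ η w‖ := by
  set E := Complex.exp (2 * κ * w * Complex.I) with hE
  have hfac : numD2 κ η w
      = (2 * η * w + Complex.I - Complex.I * E) * (2 * η * w + Complex.I + Complex.I * E) := by
    have hsq : Complex.exp (4 * Complex.I * κ * w) = E ^ 2 := by
      rw [hE, ← Complex.exp_nat_mul]; push_cast; ring_nf
    unfold numD2
    rw [hsq]
    linear_combination (E ^ 2) * Complex.I_sq
  have hEn : |E.re| ≤ 1 := by
    refine (Complex.abs_re_le_norm _).trans ?_
    rw [hE, norm_exp_mul_I, Real.exp_le_one_iff]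
    have : 0 ≤ 2 * κ * w.im := by positivity
    linarith
  obtain ⟨hE1, hE2⟩ := abs_le.1 hEn
  have h0 : 0 ≤ 2 * η * w.im := by positivity
  rw [hfac, norm_mul, sq]
  refine mul_le_mul ?_ ?_ h0 (norm_nonneg _)
  · refine le_trans ?_ ((le_abs_self _).trans (Complex.abs_im_le_norm _))
    simp; linarith
  · refine le_trans ?_ ((le_abs_self _).trans (Complex.abs_im_le_norm _))
    simp; linarith

theorem two_div_pi_mul_le_sin {a θ : ℝ} (ha : 0 ≤ a) (h1 : a ≤ θ) (h2 : θ ≤ π - a) :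
    2 / π * a ≤ Real.sin θ := by
  have hp : 0 < 2 / π := by positivity
  rcases le_total θ (π / 2) with h | h
  · exact (mul_le_mul_of_nonneg_left h1 hp.le).trans (Real.mul_le_sin (ha.trans h1) h)
  · rw [← Real.sin_pi_sub]
    exact (mul_le_mul_of_nonneg_left (by linarith) hp.le).trans
      (Real.mul_le_sin (by linarith) (by linarith))

theorem norm_mul_phi0 (l : ℝ) {w : ℂ} (hw : w ≠ 0) :
    ‖w‖ * phi0 l w = 3 * π / 4 * l⁻¹ * Real.log (l + ‖w‖ ^ 2) := by
  have hn : 0 < ‖w‖ := norm_pos_iff.2 hw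
  have hrpow : (‖w‖ ^ 2) ^ (-(1 : ℝ) / 2) = ‖w‖⁻¹ := by
    rw [← Real.rpow_natCast, ← Real.rpow_mul hn.le, ← Real.rpow_neg_one]
    norm_num
  unfold phi0
  rw [hrpow]
  field_simp
  ring

/-- If the angle `θ` stays `φ₀` away from `0` and `π`, then `l |w| sin θ ≥ (3/2) log(l + |w|²)`. -/
theorem log_le_mul_norm_mul_sin {l θ : ℝ} (hl : 1 ≤ l) {w : ℂ} (hw : w ≠ 0)
    (h1 : phi0 l w ≤ θ) (h2 : θ ≤ π - phi0 l w) :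
    3 / 2 * Real.log (l + ‖w‖ ^ 2) ≤ l * (‖w‖ * Real.sin θ) := by
  have hn : 0 < ‖w‖ := norm_pos_iff.2 hw
  have hl0 : 0 < l := by linarith
  have hL : 0 ≤ Real.log (l + ‖w‖ ^ 2) := Real.log_nonneg (by nlinarith [sq_nonneg ‖w‖])
  have hphi : 0 ≤ phi0 l w := by
    have h : 0 ≤ ‖w‖ * phi0 l w := by rw [norm_mul_phi0 l hw]; positivity
    exact nonneg_of_mul_nonneg_right h hn
  have hs := two_div_pi_mul_le_sin hphi h1 h2
  calc 3 / 2 * Real.log (l + ‖w‖ ^ 2)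
      = l * (2 / π * (‖w‖ * phi0 l w)) := by
        rw [norm_mul_phi0 l hw]
        have := Real.pi_pos
        field_simp
        ring
    _ = l * (‖w‖ * (2 / π * phi0 l w)) := by ring
    _ ≤ _ := by gcongr

theorem norm_D1 {κ η l : ℝ} (w : ℂ) :
    ‖D1 κ η l w‖ = Real.exp (-(2 * l * w.im)) * ‖gb (η / κ) (2 * κ * w)‖
      / (2 * η ^ 2 * ‖w‖ ^ 2) := by
  unfold D1
  rw [norm_div, norm_mul, norm_mul, norm_neg, Complex.norm_I, one_mul,
    show 2 * Complex.I * l * w = 2 * l * w * Complex.I by ring, norm_exp_mul_I]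
  simp

theorem norm_D2 {κ η : ℝ} (w : ℂ) :
    ‖D2 κ η w‖ = ‖numD2 κ η w‖ / (4 * η ^ 2 * ‖w‖ ^ 2) := by
  unfold D2 numD2
  rw [norm_div]
  simp

theorem norm_le_exp_half_log {l : ℝ} (hl : 0 < l) (w : ℂ) :
    ‖w‖ ≤ Real.exp (Real.log (l + ‖w‖ ^ 2) / 2) := by
  refine le_of_sq_le_sq ?_ (Real.exp_pos _).le
  rw [← Real.exp_nat_mul, Nat.cast_two, mul_div_cancel₀ _ (two_ne_zero' ℝ),
    Real.exp_log (by positivity)]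
  linarith

/-- Lower half-plane: `D₂` is small compared with `D₁`. -/
theorem norm_D2_lt_of_im_neg {κ η l : ℝ} (hκ : 0 < κ) (hη : 0 < η) (hl : 6 * κ + 3 < l)
    {w : ℂ} (hw : w ≠ 0) (hy : 3 / 2 * Real.log (l + ‖w‖ ^ 2) ≤ l * (-w.im)) :
    ‖D2 κ η w‖ < ((2 * η + 1) ^ 2 + 2) / (6 * κ) * ‖D1 κ η l w‖ / Real.log (l + ‖w‖ ^ 2) := by
  have hn : 0 < ‖w‖ := norm_pos_iff.2 hw
  have hl0 : 0 < l := by linarith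
  have hwe := norm_le_exp_half_log hl0 w
  set L := Real.log (l + ‖w‖ ^ 2) with hLdef
  have hsum : l + ‖w‖ ^ 2 = Real.exp L := (Real.exp_log (by positivity)).symm
  have hL : 0 < L := Real.log_pos (by nlinarith)
  have hle : l ≤ Real.exp L := by nlinarith
  have hexp1 : 1 ≤ Real.exp (L / 2) := Real.one_le_exp (by positivity)
  set y := -w.im with hydef
  have hypos : 0 < y := by
    by_contra h
    nlinarith
  have hg := le_norm_gb_of_im_nonpos (w := w) hκ hη (by linarith)
  rw [← hydef] at hg
  have hκy : 6 * (κ * y) ≤ l * y := by nlinarith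
  have hN := norm_numD2_le (κ := κ) hη w
  rw [← hydef] at hN
  have hN1 : (2 * η * ‖w‖ + 1) ^ 2 ≤ (2 * η + 1) ^ 2 * Real.exp (2 * l * y - L) := by
    calc (2 * η * ‖w‖ + 1) ^ 2 ≤ ((2 * η + 1) * Real.exp (L / 2)) ^ 2 := by
          gcongr
          nlinarith
      _ = (2 * η + 1) ^ 2 * Real.exp L := by
          rw [mul_pow, ← Real.exp_nat_mul]; ring_nf
      _ ≤ _ := by
          gcongr
          linarith
  have hN2 : Real.exp (4 * κ * y) ≤ Real.exp (2 * l * y - L) := Real.exp_le_exp.2 (by linarith)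
  have hlow : 3 * κ * Real.exp (2 * l * y - L) * L
      ≤ Real.exp (2 * l * y) * ‖gb (η / κ) (2 * κ * w)‖ := by
    have hyL : 3 / 2 * L ≤ Real.exp L * y := hy.trans (by gcongr)
    calc 3 * κ * Real.exp (2 * l * y - L) * L
        = 2 * κ * Real.exp (2 * l * y - L) * (3 / 2 * L) := by ring
      _ ≤ 2 * κ * Real.exp (2 * l * y - L) * (Real.exp L * y) := by gcongr
      _ = (Real.exp (2 * l * y - L) * Real.exp L) * (2 * κ * y) := by ring
      _ = Real.exp (2 * l * y) * (2 * κ * y) := by rw [← Real.exp_add]; ring_nf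
      _ ≤ _ := by gcongr
  have hX := Real.exp_pos (2 * l * y - L)
  set X := Real.exp (2 * l * y - L)
  have hNX : ‖numD2 κ η w‖ < ((2 * η + 1) ^ 2 + 2) * X := by nlinarith
  rw [norm_D2, norm_D1, show -(2 * l * w.im) = 2 * l * y by rw [hydef]; ring]
  set G := Real.exp (2 * l * y) * ‖gb (η / κ) (2 * κ * w)‖
  have hGX : X ≤ G / (3 * κ * L) := by
    rw [le_div_iff₀ (by positivity)]; linarith
  calc ‖numD2 κ η w‖ / (4 * η ^ 2 * ‖w‖ ^ 2)
      < ((2 * η + 1) ^ 2 + 2) * X / (4 * η ^ 2 * ‖w‖ ^ 2) := by gcongr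
    _ ≤ ((2 * η + 1) ^ 2 + 2) * (G / (3 * κ * L)) / (4 * η ^ 2 * ‖w‖ ^ 2) := by gcongr
    _ = _ := by field_simp; ring

/-- Upper half-plane: `D₁` is small compared with `D₂`. -/
theorem norm_D1_lt_of_im_pos {κ η l : ℝ} (hκ : 0 < κ) (hη : 0 < η) (hl : 6 * κ + 3 < l)
    {w : ℂ} (hw : w ≠ 0) (hy : 3 / 2 * Real.log (l + ‖w‖ ^ 2) ≤ l * w.im) :
    ‖D1 κ η l w‖ < (2 * η + 1) / η ^ 2 * ‖D2 κ η w‖ / Real.log (l + ‖w‖ ^ 2) := by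
  have hn : 0 < ‖w‖ := norm_pos_iff.2 hw
  have hl0 : 0 < l := by linarith
  have hwe := norm_le_exp_half_log hl0 w
  set L := Real.log (l + ‖w‖ ^ 2) with hLdef
  have hsum : l + ‖w‖ ^ 2 = Real.exp L := (Real.exp_log (by positivity)).symm
  have hL1 : 1 ≤ L := by
    rw [hLdef, Real.le_log_iff_exp_le (by positivity)]
    nlinarith [Real.exp_one_lt_d9]
  have hL : 0 < L := by linarith
  have hle : l ≤ Real.exp L := by nlinarith
  have hexp1 : 1 ≤ Real.exp (L / 2) := Real.one_le_exp (by positivity)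
  set y := w.im with hydef
  have hypos : 0 < y := by
    by_contra h
    nlinarith
  have hκy : 6 * (κ * y) ≤ l * y := by nlinarith
  have hg := norm_gb_le_of_im_nonneg (w := w) hκ hη hypos.le
  have hN := le_norm_numD2_of_im_nonneg (w := w) hκ hη hypos.le
  rw [← hydef] at hg hN
  have hG : Real.exp (-(2 * l * y)) * ‖gb (η / κ) (2 * κ * w)‖ * l ^ 2 ≤ 2 * η + 1 := by
    calc Real.exp (-(2 * l * y)) * ‖gb (η / κ) (2 * κ * w)‖ * l ^ 2
        ≤ Real.exp (-(2 * l * y)) * (Real.exp (2 * κ * y) * ((2 * η + 1) * Real.exp (L / 2)))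
          * Real.exp L ^ 2 := by
          gcongr
          refine hg.trans ?_
          gcongr
          nlinarith
      _ = (2 * η + 1) * Real.exp (-(2 * l * y) + 2 * κ * y + L / 2 + (2 : ℕ) * L) := by
          rw [Real.exp_add, Real.exp_add, Real.exp_add, Real.exp_nat_mul]; ring
      _ ≤ (2 * η + 1) * 1 := by
          gcongr
          rw [Real.exp_le_one_iff]
          push_cast
          linarith
      _ = _ := mul_one _
  have hNl : 9 * η ^ 2 * L ≤ ‖numD2 κ η w‖ * l ^ 2 := by
    calc 9 * η ^ 2 * L ≤ 9 * η ^ 2 * L ^ 2 := by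
          gcongr
          nlinarith
      _ = (2 * η) ^ 2 * (3 / 2 * L) ^ 2 := by ring
      _ ≤ (2 * η) ^ 2 * (l * y) ^ 2 := by gcongr
      _ = (2 * η * y) ^ 2 * l ^ 2 := by ring
      _ ≤ _ := by gcongr
  rw [norm_D2, norm_D1, ← hydef]
  set G := Real.exp (-(2 * l * y)) * ‖gb (η / κ) (2 * κ * w)‖
  set N := ‖numD2 κ η w‖
  have hGN : 2 * η ^ 2 * L * G < (2 * η + 1) * N := by
    have h1 : 2 * η ^ 2 * L * G * l ^ 2 < (2 * η + 1) * N * l ^ 2 := by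
      calc 2 * η ^ 2 * L * G * l ^ 2 = 2 * η ^ 2 * L * (G * l ^ 2) := by ring
        _ ≤ 2 * η ^ 2 * L * (2 * η + 1) := by gcongr
        _ < 9 * η ^ 2 * L * (2 * η + 1) := by
            have : 0 < η ^ 2 * L * (2 * η + 1) := by positivity
            linarith
        _ ≤ N * l ^ 2 * (2 * η + 1) := by gcongr
        _ = _ := by ring
    exact lt_of_mul_lt_mul_right h1 (by positivity)
  calc G / (2 * η ^ 2 * ‖w‖ ^ 2)
      = 2 * η ^ 2 * L * G / (4 * η ^ 4 * L * ‖w‖ ^ 2) := by field_simp; ring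
    _ < (2 * η + 1) * N / (4 * η ^ 4 * L * ‖w‖ ^ 2) := by gcongr
    _ = _ := by field_simp

/-- Approximation of `D̂_l` by `D₁` in the lower sector and by `D₂` in the
upper sector, with relative errors `O(1/log(l + r))`. -/
theorem stmt6 (κ η : ℝ) (hκ : 0 < κ) (hη : 0 < η) :
    ∃ l₀ > κ, ∃ C > (0 : ℝ), ∀ l > l₀, ∀ w : ℂ, w ≠ 0 →
      (((-π + phi0 l w < Complex.arg w ∧ Complex.arg w < -phi0 l w) →
        ‖Dhat κ η l w - D1 κ η l w‖ <
          C * ‖D1 κ η l w‖ / Real.log (l + ‖w‖ ^ 2)) ∧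
       ((π / 2 ≤ Complex.arg w ∧ Complex.arg w ≤ π - phi0 l w) →
        ‖Dhat κ η l w - D2 κ η w‖ <
          C * ‖D2 κ η w‖ / Real.log (l + ‖w‖ ^ 2))) := by
  refine ⟨6 * κ + 3, by linarith,
    max (((2 * η + 1) ^ 2 + 2) / (6 * κ)) ((2 * η + 1) / η ^ 2),
    lt_max_of_lt_left (by positivity), fun l hl w hw => ?_⟩
  have hl1 : 1 ≤ l := by linarith
  have hL : 0 ≤ Real.log (l + ‖w‖ ^ 2) := Real.log_nonneg (by nlinarith [sq_nonneg ‖w‖])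
  have him : ‖w‖ * Real.sin (Complex.arg w) = w.im := Complex.norm_mul_sin_arg w
  rw [Dhat_eq_D1_add_D2 hκ hη l hw, add_sub_cancel_left, add_sub_cancel_right]
  refine ⟨fun h => ?_, fun h => ?_⟩
  · have hy := log_le_mul_norm_mul_sin (θ := -Complex.arg w) hl1 hw (by linarith) (by linarith)
    rw [Real.sin_neg, mul_neg, him] at hy
    refine (norm_D2_lt_of_im_neg hκ hη hl hw hy).trans_le ?_
    gcongr
    exact le_max_left _ _
  · have hphi : phi0 l w ≤ Complex.arg w := by linarith
    have hy := log_le_mul_norm_mul_sin hl1 hw hphi h.2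
    rw [him] at hy
    refine (norm_D1_lt_of_im_pos hκ hη hl hw hy).trans_le ?_
    gcongr
    exact le_max_right _ _
end
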